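/- Let C be an abelian category. For a class ξ of short exact sequences closed under isomorphism, ξ is a saturated proper class if and only if the associated subfunctor E_ξ of Ext^1 (where E_ξ(C,A) consists of classes of sequences in ξ) is a closed additive subfunctor, i.e., E_ξ(C,A) is a subgroup for all A,C, is stable under pushout and pullback, and E_ξ-inflations are closed under composition. -/

import Mathlib

open CategoryTheory CategoryTheory.Limits CategoryTheory.Abelian

universe w v u

variable {C : Type u} [Category.{v} C] [Abelian C] [HasExt.{w} C]

/-- An additive subfunctor of `Ext¹`, given by a set of extension classes in each
`Ext Z A 1`, which is an additive subgroup stable under pushout (composition with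
`Ext.mk₀ a` on the right) and pullback (composition with `Ext.mk₀ c` on the left). -/
structure IsAddSubfunctor (F : ∀ Z A : C, Set (Ext Z A 1)) : Prop where
  zero_mem : ∀ Z A : C, (0 : Ext Z A 1) ∈ F Z A
  add_mem : ∀ (Z A : C), ∀ δ₁ ∈ F Z A, ∀ δ₂ ∈ F Z A, δ₁ + δ₂ ∈ F Z A
  neg_mem : ∀ (Z A : C), ∀ δ ∈ F Z A, -δ ∈ F Z A
  push : ∀ (Z A A' : C) (a : A ⟶ A'), ∀ δ ∈ F Z A, δ.comp (Ext.mk₀ a) (add_zero 1) ∈ F Z A'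
  pull : ∀ (Z Z' A : C) (c : Z' ⟶ Z), ∀ δ ∈ F Z A, (Ext.mk₀ c).comp δ (zero_add 1) ∈ F Z' A

/-- `f` is an `F`-inflation if it is the mono of a short exact sequence whose
extension class lies in `F`. -/
def IsFInflation (F : ∀ Z A : C, Set (Ext Z A 1)) {A B : C} (f : A ⟶ B) : Prop :=
  ∃ (Z : C) (g : B ⟶ Z) (w : f ≫ g = 0) (hS : (ShortComplex.mk f g w).ShortExact),
    hS.extClass ∈ F Z A

/-- `g` is an `F`-deflation if it is the epi of a short exact sequence whose
extension class lies in `F`. -/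
def IsFDeflation (F : ∀ Z A : C, Set (Ext Z A 1)) {B Z : C} (g : B ⟶ Z) : Prop :=
  ∃ (A : C) (f : A ⟶ B) (w : f ≫ g = 0) (hS : (ShortComplex.mk f g w).ShortExact),
    hS.extClass ∈ F Z A

/-- The class of `F`-inflations is closed under composition. -/
def InflationsClosed (F : ∀ Z A : C, Set (Ext Z A 1)) : Prop :=
  ∀ ⦃A B D : C⦄ (f : A ⟶ B) (g : B ⟶ D),
    IsFInflation F f → IsFInflation F g → IsFInflation F (f ≫ g)

/-- The class of `F`-deflations is closed under composition. -/
def DeflationsClosed (F : ∀ Z A : C, Set (Ext Z A 1)) : Prop :=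
  ∀ ⦃E B Z : C⦄ (e : E ⟶ B) (g : B ⟶ Z),
    IsFDeflation F e → IsFDeflation F g → IsFDeflation F (e ≫ g)

/-- The classes in `Ext Z A 1` realized by some short exact sequence in `ξ`. -/
def EClass (ξ : Set (ShortComplex C)) (Z A : C) : Set (Ext Z A 1) :=
  {δ | ∃ (B : C) (f : A ⟶ B) (g : B ⟶ Z) (w : f ≫ g = 0)
      (hS : (ShortComplex.mk f g w).ShortExact),
      ShortComplex.mk f g w ∈ ξ ∧ hS.extClass = δ}

/-- A proper class of short exact sequences: closed under isomorphism, consisting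
of short exact sequences, containing all split short exact sequences, closed under
finite direct sums, and closed under base change and cobase change. -/
structure IsProperClass (ξ : Set (ShortComplex C)) : Prop where
  shortExact : ∀ S ∈ ξ, S.ShortExact
  iso_closed : ∀ S ∈ ξ, ∀ S' : ShortComplex C, Nonempty (S ≅ S') → S' ∈ ξ
  split_mem : ∀ S : ShortComplex C, Nonempty S.Splitting → S ∈ ξ
  sum_mem : ∀ S ∈ ξ, ∀ T ∈ ξ,
    ShortComplex.mk (biprod.map S.f T.f) (biprod.map S.g T.g)
      (by ext <;> simp [S.zero, T.zero]) ∈ ξ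
  base_change : ∀ (Z A : C), ∀ δ ∈ EClass ξ Z A, ∀ (Z' : C) (c : Z' ⟶ Z),
    (Ext.mk₀ c).comp δ (zero_add 1) ∈ EClass ξ Z' A
  cobase_change : ∀ (Z A : C), ∀ δ ∈ EClass ξ Z A, ∀ (A' : C) (a : A ⟶ A'),
    δ.comp (Ext.mk₀ a) (add_zero 1) ∈ EClass ξ Z A'

/-- `ξ` is saturated: in the standard pullback 3×3 diagram obtained from two short
exact sequences over a common cokernel `Z`, if the relevant column
`A₂ → B₂ → Z` and the middle row `A₁ → M → B₂` belong to `ξ`, then the bottom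
row `A₁ → B₁ → Z` belongs to `ξ`. -/
def IsSaturated (ξ : Set (ShortComplex C)) : Prop :=
  ∀ ⦃A₁ B₁ Z A₂ B₂ M : C⦄
    (x₁ : A₁ ⟶ B₁) (y₁ : B₁ ⟶ Z) (x₂ : A₂ ⟶ B₂) (y₂ : B₂ ⟶ Z)
    (m₁ : A₁ ⟶ M) (e₁ : M ⟶ B₂) (m₂ : A₂ ⟶ M) (e₂ : M ⟶ B₁)
    (w₁ : x₁ ≫ y₁ = 0) (w₂ : x₂ ≫ y₂ = 0) (wr : m₁ ≫ e₁ = 0) (wc : m₂ ≫ e₂ = 0)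
    (_c₁ : m₁ ≫ e₂ = x₁) (_c₂ : m₂ ≫ e₁ = x₂) (_c₃ : e₁ ≫ y₂ = e₂ ≫ y₁)
    (_hpb : IsPullback e₂ e₁ y₁ y₂)
    (_h₁ : (ShortComplex.mk x₁ y₁ w₁).ShortExact)
    (_h₂ : (ShortComplex.mk x₂ y₂ w₂).ShortExact)
    (_hr : (ShortComplex.mk m₁ e₁ wr).ShortExact)
    (_hc : (ShortComplex.mk m₂ e₂ wc).ShortExact),
    ShortComplex.mk x₂ y₂ w₂ ∈ ξ → ShortComplex.mk m₁ e₁ wr ∈ ξ →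
    ShortComplex.mk x₁ y₁ w₁ ∈ ξ

/-- `ξ` satisfies the 3×3-lemma property: in any commutative 3×3 diagram of short
exact sequences in which all three columns and the two outer rows belong to `ξ`,
the middle row belongs to `ξ`. -/
def Has3x3Class (ξ : Set (ShortComplex C)) : Prop :=
  ∀ ⦃A B Z D E G H I J : C⦄
    (a : A ⟶ B) (b : B ⟶ Z) (d : D ⟶ E) (e : E ⟶ G) (g : H ⟶ I) (h : I ⟶ J)
    (i : A ⟶ D) (j : B ⟶ E) (c : Z ⟶ G) (k : D ⟶ H) (l : E ⟶ I) (f : G ⟶ J)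
    (w₁ : a ≫ b = 0) (w₂ : d ≫ e = 0) (w₃ : g ≫ h = 0)
    (v₁ : i ≫ k = 0) (v₂ : j ≫ l = 0) (v₃ : c ≫ f = 0)
    (_sq₁ : a ≫ j = i ≫ d) (_sq₂ : b ≫ c = j ≫ e)
    (_sq₃ : d ≫ l = k ≫ g) (_sq₄ : e ≫ f = l ≫ h)
    (_h₁ : (ShortComplex.mk a b w₁).ShortExact)
    (_h₂ : (ShortComplex.mk d e w₂).ShortExact)
    (_h₃ : (ShortComplex.mk g h w₃).ShortExact)
    (_hc₁ : (ShortComplex.mk i k v₁).ShortExact)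
    (_hc₂ : (ShortComplex.mk j l v₂).ShortExact)
    (_hc₃ : (ShortComplex.mk c f v₃).ShortExact),
    ShortComplex.mk a b w₁ ∈ ξ → ShortComplex.mk g h w₃ ∈ ξ →
    ShortComplex.mk i k v₁ ∈ ξ → ShortComplex.mk j l v₂ ∈ ξ →
    ShortComplex.mk c f v₃ ∈ ξ →
    ShortComplex.mk d e w₂ ∈ ξ

/-!
Two short exact sequences with the same ends and the same extension class are isomorphic, so `ξ`
and `E_ξ` determine each other. Closure of `ξ` under direct sums then corresponds to closure of
`E_ξ` under addition by the Baer sum, and saturation of `ξ` says that `δ` lies in `E_ξ` as soon as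
its pullback along some `E_ξ`-deflation does.

For an additive subfunctor `F`, this reflection property is equivalent to `F`-inflations being
closed under composition. If `A ⟶ B ⟶ D` are `F`-inflations with cokernels `Z` and `W`, let `V` be
the cokernel of the composite. Pulling `D ⟶ W` back along `V ⟶ W` gives an `F`-deflation `e` onto
`V`, and modulo maps that lift to `D` it factors through `Z ⟶ V`; hence `e` pulls the class of
`A ⟶ D ⟶ V` back to a pullback of the class of `A ⟶ B ⟶ Z`. Conversely, if the pullback
`A ⟶ M ⟶ E` of `δ` along an `F`-deflation `E ⟶ Z` lies in `F`, then the pushout of `δ` along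
`A ⟶ M` dies in `Ext E M 1`, so it is a pushout of the class of the deflation. Thus
`A ⟶ M ⟶ P` is a composite of `F`-inflations, and `δ` is a pullback of its class.
-/

section ShortExact

omit [HasExt.{w} C]

lemma shortExact_of_isPullback {A B Z M E : C} {x : A ⟶ B} {y : B ⟶ Z} {w : x ≫ y = 0}
    (hS : (ShortComplex.mk x y w).ShortExact) {e : E ⟶ Z} {p : M ⟶ B} {q : M ⟶ E}
    (hpb : IsPullback p q y e) {m : A ⟶ M} (hmp : m ≫ p = x) (hmq : m ≫ q = 0) :
    (ShortComplex.mk m q hmq).ShortExact := by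
  have : Mono x := hS.mono_f
  have : Epi y := hS.epi_g
  have : Mono (m ≫ p) := by rwa [hmp]
  have hm : Mono m := mono_of_mono m p
  have hq : Epi q := (MorphismProperty.epimorphisms C).of_isPullback hpb ‹Epi y›
  refine .mk' (ShortComplex.exact_of_f_is_kernel _
    (KernelFork.IsLimit.ofι' _ _ fun k hk ↦ ?_)) hm hq
  have hky : (k ≫ p) ≫ y = 0 := by rw [Category.assoc, hpb.w, reassoc_of% hk, zero_comp]
  refine ⟨hS.exact.lift (k ≫ p) hky, hpb.hom_ext ?_ ?_⟩
  · rw [Category.assoc, hmp]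
    exact hS.exact.lift_f _ hky
  · rw [Category.assoc, hmq, comp_zero]
    exact hk.symm

lemma shortExact_of_isPushout {A B Z M P : C} {x : A ⟶ B} {y : B ⟶ Z} {w : x ≫ y = 0}
    (hS : (ShortComplex.mk x y w).ShortExact) {m : A ⟶ M} {i : B ⟶ P} {j : M ⟶ P}
    (hpo : IsPushout x m i j) {r : P ⟶ Z} (hir : i ≫ r = y) (hjr : j ≫ r = 0) :
    (ShortComplex.mk j r hjr).ShortExact :=
  (shortExact_of_isPullback hS.op hpo.op.flip (m := r.op) (congrArg Quiver.Hom.op hir)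
    (congrArg Quiver.Hom.op hjr)).unop

lemma shortExact_comp_of_isPushout {A B D Z V : C} {f : A ⟶ B} {π : B ⟶ Z} {w : f ≫ π = 0}
    (hf : (ShortComplex.mk f π w).ShortExact) {g : B ⟶ D} [Mono g] {i : Z ⟶ V} {p : D ⟶ V}
    (hpo : IsPushout π g i p) (wp : (f ≫ g) ≫ p = 0) :
    (ShortComplex.mk (f ≫ g) p wp).ShortExact := by
  have : Mono f := hf.mono_f
  have : Epi π := hf.epi_g
  have hp : Epi p := (MorphismProperty.epimorphisms C).of_isPushout hpo.flip ‹Epi π›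
  refine .mk' (ShortComplex.exact_of_g_is_cokernel _
    (CokernelCofork.IsColimit.ofπ' _ _ fun k hk ↦ ?_)) (mono_comp f g) hp
  have hfgk : f ≫ g ≫ k = 0 := by rw [← Category.assoc]; exact hk
  have hk' : π ≫ hf.exact.desc (g ≫ k) hfgk = g ≫ k := hf.exact.g_desc _ hfgk
  exact ⟨hpo.desc (hf.exact.desc (g ≫ k) hfgk) k hk', hpo.inr_desc _ _ _⟩

/-- The direct sum of two short complexes, with each biproduct taken in `C` as in
`IsProperClass.sum_mem`. -/
noncomputable abbrev biprodShortComplex (S T : ShortComplex C) : ShortComplex C :=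
  ShortComplex.mk (biprod.map S.f T.f) (biprod.map S.g T.g) (by ext <;> simp)

lemma shortExact_biprodShortComplex {S T : ShortComplex C} (hS : S.ShortExact)
    (hT : T.ShortExact) : (biprodShortComplex S T).ShortExact := by
  have := hS.mono_f
  have := hS.epi_g
  have := hT.mono_f
  have := hT.epi_g
  refine .mk' (ShortComplex.exact_of_f_is_kernel _
    (KernelFork.IsLimit.ofι' _ _ fun k hk ↦ ?_)) inferInstance inferInstance
  have hfst : (k ≫ biprod.fst) ≫ S.g = 0 := by simpa using hk =≫ biprod.fst
  have hsnd : (k ≫ biprod.snd) ≫ T.g = 0 := by simpa using hk =≫ biprod.snd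
  exact ⟨biprod.lift (hS.exact.lift _ hfst) (hT.exact.lift _ hsnd), by dsimp; ext <;> simp⟩

end ShortExact

section ExtClass

lemma extClass_comp_mk₀_eq_mk₀_comp_extClass {S T : ShortComplex C} (hS : S.ShortExact)
    (hT : T.ShortExact) (a : S.X₁ ⟶ T.X₁) (b : S.X₂ ⟶ T.X₂) (c : S.X₃ ⟶ T.X₃)
    (hab : a ≫ T.f = S.f ≫ b) (hbc : b ≫ T.g = S.g ≫ c) :
    hS.extClass.comp (Ext.mk₀ a) (add_zero 1) = (Ext.mk₀ c).comp hT.extClass (zero_add 1) :=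
  ShortComplex.ShortExact.extClass_naturality hS hT (ShortComplex.homMk a b c hab hbc)

lemma mk₀_comp_extClass_eq {A B Z B' Z' : C} {x : A ⟶ B} {y : B ⟶ Z} {w : x ≫ y = 0}
    {x' : A ⟶ B'} {y' : B' ⟶ Z'} {w' : x' ≫ y' = 0}
    (hS : (ShortComplex.mk x y w).ShortExact) (hT : (ShortComplex.mk x' y' w').ShortExact)
    (b : B ⟶ B') (c : Z ⟶ Z') (hxb : x ≫ b = x') (hbc : b ≫ y' = y ≫ c) :
    (Ext.mk₀ c).comp hT.extClass (zero_add 1) = hS.extClass := by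
  simpa using (extClass_comp_mk₀_eq_mk₀_comp_extClass hS hT (𝟙 A) b c (by simp [hxb]) hbc).symm

lemma extClass_comp_mk₀_eq {A B Z A' B' : C} {x : A ⟶ B} {y : B ⟶ Z} {w : x ≫ y = 0}
    {x' : A' ⟶ B'} {y' : B' ⟶ Z} {w' : x' ≫ y' = 0}
    (hS : (ShortComplex.mk x y w).ShortExact) (hT : (ShortComplex.mk x' y' w').ShortExact)
    (a : A ⟶ A') (b : B ⟶ B') (hab : a ≫ x' = x ≫ b) (hby : b ≫ y' = y) :
    hS.extClass.comp (Ext.mk₀ a) (add_zero 1) = hT.extClass := by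
  simpa using extClass_comp_mk₀_eq_mk₀_comp_extClass hS hT a b (𝟙 Z) hab (by simp [hby])

lemma exists_lift_of_mk₀_comp_extClass_eq_zero {S : ShortComplex C} (hS : S.ShortExact) {X : C}
    (c : X ⟶ S.X₃) (hc : (Ext.mk₀ c).comp hS.extClass (zero_add 1) = 0) :
    ∃ t : X ⟶ S.X₂, t ≫ S.g = c := by
  obtain ⟨t', ht'⟩ := Ext.covariant_sequence_exact₃ X hS (Ext.mk₀ c) (zero_add 1) hc
  obtain ⟨t, rfl⟩ := (Ext.mk₀_bijective _ _).surjective t'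
  exact ⟨t, (Ext.mk₀_bijective _ _).injective (by rw [← Ext.mk₀_comp_mk₀, ht'])⟩

lemma exists_extension_of_extClass_comp_mk₀_eq_zero {S : ShortComplex C} (hS : S.ShortExact)
    {Y : C} (a : S.X₁ ⟶ Y) (ha : hS.extClass.comp (Ext.mk₀ a) (add_zero 1) = 0) :
    ∃ s : S.X₂ ⟶ Y, S.f ≫ s = a := by
  obtain ⟨s', hs'⟩ := Ext.contravariant_sequence_exact₁ hS Y (Ext.mk₀ a) (add_zero 1) ha
  obtain ⟨s, rfl⟩ := (Ext.mk₀_bijective _ _).surjective s'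
  exact ⟨s, (Ext.mk₀_bijective _ _).injective (by rw [← Ext.mk₀_comp_mk₀, hs'])⟩

lemma exists_hom_of_extClass_comp_mk₀_eq {S T : ShortComplex C} (hS : S.ShortExact)
    (hT : T.ShortExact) (a : S.X₁ ⟶ T.X₁) (c : S.X₃ ⟶ T.X₃)
    (h : hS.extClass.comp (Ext.mk₀ a) (add_zero 1) =
      (Ext.mk₀ c).comp hT.extClass (zero_add 1)) :
    ∃ φ : S ⟶ T, φ.τ₁ = a ∧ φ.τ₃ = c := by
  have := hT.mono_f
  obtain ⟨t, ht⟩ : ∃ t : S.X₂ ⟶ T.X₂, t ≫ T.g = S.g ≫ c :=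
    exists_lift_of_mk₀_comp_extClass_eq_zero hT _ (by
      rw [← Ext.mk₀_comp_mk₀_assoc, ← h, hS.comp_extClass_assoc])
  have hft : (S.f ≫ t) ≫ T.g = 0 := by rw [Category.assoc, ht, S.zero_assoc, zero_comp]
  let a' : S.X₁ ⟶ T.X₁ := hT.exact.lift (S.f ≫ t) hft
  have ha' : a' ≫ T.f = S.f ≫ t := hT.exact.lift_f _ hft
  -- `(a', t, c)` is a morphism; `a'` and `a` push `S` to the same class, so `a' - a` extends to
  -- `S.X₂` and `t` can be corrected by that extension.
  obtain ⟨s, hs⟩ : ∃ s : S.X₂ ⟶ T.X₁, S.f ≫ s = a' - a :=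
    exists_extension_of_extClass_comp_mk₀_eq_zero hS _ (by
      rw [sub_eq_add_neg, Ext.mk₀_add, Ext.comp_add, Ext.mk₀_neg, Ext.comp_neg,
        extClass_comp_mk₀_eq_mk₀_comp_extClass hS hT a' t c ha' ht, h, add_neg_cancel])
  refine ⟨ShortComplex.homMk a (t - s ≫ T.f) c ?_ ?_, rfl, rfl⟩
  · rw [Preadditive.comp_sub, reassoc_of% hs, Preadditive.sub_comp, ha', sub_sub_cancel]
  · rw [Preadditive.sub_comp, Category.assoc, T.zero, comp_zero, sub_zero, ht]

lemma nonempty_iso_of_extClass_eq {A B B' Z : C} {x : A ⟶ B} {y : B ⟶ Z} {w : x ≫ y = 0}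
    {x' : A ⟶ B'} {y' : B' ⟶ Z} {w' : x' ≫ y' = 0}
    (hS : (ShortComplex.mk x y w).ShortExact) (hT : (ShortComplex.mk x' y' w').ShortExact)
    (h : hS.extClass = hT.extClass) :
    Nonempty (ShortComplex.mk x y w ≅ ShortComplex.mk x' y' w') := by
  obtain ⟨φ, h₁, h₃⟩ := exists_hom_of_extClass_comp_mk₀_eq hS hT (𝟙 A) (𝟙 Z) (by simp [h])
  have i₁ : IsIso φ.τ₁ := h₁ ▸ inferInstanceAs (IsIso (𝟙 A))
  have i₃ : IsIso φ.τ₃ := h₃ ▸ inferInstanceAs (IsIso (𝟙 Z))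
  have : IsIso φ.τ₂ := ShortComplex.isIso₂_of_shortExact_of_isIso₁₃' φ hS hT i₁ i₃
  have : IsIso φ := ShortComplex.isIso_of_isIso φ
  exact ⟨asIso φ⟩

lemma extClass_eq_zero_of_splitting {S : ShortComplex C} (hS : S.ShortExact) (s : S.Splitting) :
    hS.extClass = 0 := by
  rw [← Ext.mk₀_id_comp hS.extClass, ← s.s_g, ← Ext.mk₀_comp_mk₀_assoc, hS.comp_extClass,
    Ext.comp_zero]

lemma extClass_biprodShortComplex {S T : ShortComplex C} (hS : S.ShortExact) (hT : T.ShortExact)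
    (h : (biprodShortComplex S T).ShortExact) :
    h.extClass =
      ((Ext.mk₀ biprod.fst).comp hS.extClass (zero_add 1)).comp
        (Ext.mk₀ biprod.inl) (add_zero 1) +
      ((Ext.mk₀ biprod.snd).comp hT.extClass (zero_add 1)).comp
        (Ext.mk₀ biprod.inr) (add_zero 1) := by
  rw [← extClass_comp_mk₀_eq_mk₀_comp_extClass h hS biprod.fst biprod.fst biprod.fst
      (by simp) (by simp),
    ← extClass_comp_mk₀_eq_mk₀_comp_extClass h hT biprod.snd biprod.snd biprod.snd
      (by simp) (by simp)]
  simp only [Ext.comp_assoc_of_second_deg_zero, Ext.mk₀_comp_mk₀, ← Ext.comp_add, ← Ext.mk₀_add,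
    biprod.total, Ext.comp_mk₀_id]

lemma extClass_add_extClass {A B B' Z : C} {x : A ⟶ B} {y : B ⟶ Z} {w : x ≫ y = 0}
    {x' : A ⟶ B'} {y' : B' ⟶ Z} {w' : x' ≫ y' = 0}
    (hS : (ShortComplex.mk x y w).ShortExact) (hT : (ShortComplex.mk x' y' w').ShortExact) :
    hS.extClass + hT.extClass =
      ((Ext.mk₀ (biprod.lift (𝟙 Z) (𝟙 Z))).comp
        (shortExact_biprodShortComplex hS hT).extClass (zero_add 1)).comp
          (Ext.mk₀ (biprod.desc (𝟙 A) (𝟙 A))) (add_zero 1) := by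
  rw [extClass_biprodShortComplex hS hT]
  simp [Ext.comp_assoc_of_third_deg_zero, Ext.mk₀_comp_mk₀_assoc]

end ExtClass

section Subfunctor

variable {F : ∀ Z A : C, Set (Ext Z A 1)}

/-- `F` reflects membership along `F`-deflations: an extension class belongs to `F` as soon as its
pullback along some `F`-deflation does. This is saturation expressed in terms of `Ext¹`. Extension
classes are given by short exact sequences representing them. -/
def ReflectsAlongDeflations (F : ∀ Z A : C, Set (Ext Z A 1)) : Prop :=
  ∀ ⦃A B Z E : C⦄ (x : A ⟶ B) (y : B ⟶ Z) (w : x ≫ y = 0)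
    (hS : (ShortComplex.mk x y w).ShortExact) (e : E ⟶ Z), IsFDeflation F e →
    (Ext.mk₀ e).comp hS.extClass (zero_add 1) ∈ F E A → hS.extClass ∈ F Z A

lemma IsFDeflation.of_isPullback (hF : IsAddSubfunctor F) {B Z M E : C} {y : B ⟶ Z} {e : E ⟶ Z}
    {p : M ⟶ B} {q : M ⟶ E} (hy : IsFDeflation F y) (hpb : IsPullback p q y e) :
    IsFDeflation F q := by
  obtain ⟨A, x, w, hS, hSF⟩ := hy
  obtain ⟨m, hmp, hmq⟩ : ∃ m : A ⟶ M, m ≫ p = x ∧ m ≫ q = 0 :=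
    ⟨hpb.lift x 0 (by simp [w]), hpb.lift_fst _ _ _, hpb.lift_snd _ _ _⟩
  have hT := shortExact_of_isPullback hS hpb hmp hmq
  refine ⟨A, m, hmq, hT, ?_⟩
  rw [← mk₀_comp_extClass_eq hT hS p e hmp hpb.w]
  exact hF.pull _ _ _ e _ hSF

lemma ReflectsAlongDeflations.inflationsClosed (hF : IsAddSubfunctor F)
    (hrefl : ReflectsAlongDeflations F) : InflationsClosed F := by
  rintro A B D f g ⟨Z, π, wf, hf, hfF⟩ ⟨W, q, wg, hg, hgF⟩
  have : Mono g := hg.mono_f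
  have hpo := IsPushout.of_hasPushout π g
  set i := pushout.inl π g
  set p := pushout.inr π g
  have wp : (f ≫ g) ≫ p = 0 := by rw [Category.assoc, ← hpo.w, reassoc_of% wf, zero_comp]
  have hfg := shortExact_comp_of_isPushout hf hpo wp
  obtain ⟨r, hir, hpr⟩ : ∃ r : pushout π g ⟶ W, i ≫ r = 0 ∧ p ≫ r = q :=
    ⟨hpo.desc 0 q (by simp [wg]), hpo.inl_desc _ _ _, hpo.inr_desc _ _ _⟩
  have hi := shortExact_of_isPushout hg hpo.flip hpr hir
  have : Mono i := hi.mono_f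
  have hpb := IsPullback.of_hasPullback q r
  set t := pullback.fst q r
  set e := pullback.snd q r
  have he : IsFDeflation F e := IsFDeflation.of_isPullback hF ⟨B, g, wg, hg, hgF⟩ hpb
  refine ⟨_, p, wp, hfg, hrefl _ _ wp hfg e he ?_⟩
  obtain ⟨s, hs⟩ : ∃ s : pullback q r ⟶ Z, s ≫ i = e - t ≫ p :=
    ⟨_, hi.exact.lift_f (e - t ≫ p) (by simp [hpr, hpb.w])⟩
  have hclass : (Ext.mk₀ e).comp hfg.extClass (zero_add 1) =
      (Ext.mk₀ s).comp hf.extClass (zero_add 1) := by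
    have hpδ : (Ext.mk₀ p).comp hfg.extClass (zero_add 1) = 0 := hfg.comp_extClass
    rw [← sub_add_cancel e (t ≫ p), ← hs, Ext.mk₀_add, Ext.add_comp, ← Ext.mk₀_comp_mk₀_assoc,
      ← Ext.mk₀_comp_mk₀_assoc, hpδ, Ext.comp_zero, add_zero,
      mk₀_comp_extClass_eq hf hfg g i rfl hpo.w.symm]
  rw [hclass]
  exact hF.pull _ _ _ s _ hfF

lemma InflationsClosed.extClass_mem_of_comp_mk₀_mem (hF : IsAddSubfunctor F)
    (hcl : InflationsClosed F) {A B Z M : C} {x : A ⟶ B} {y : B ⟶ Z} {w : x ≫ y = 0}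
    (hS : (ShortComplex.mk x y w).ShortExact) {m : A ⟶ M} (hm : IsFInflation F m)
    (hmem : hS.extClass.comp (Ext.mk₀ m) (add_zero 1) ∈ F Z M) : hS.extClass ∈ F Z A := by
  have : Epi y := hS.epi_g
  have hpo := IsPushout.of_hasPushout x m
  set i := pushout.inl x m
  set j := pushout.inr x m
  obtain ⟨r, hir, hjr⟩ : ∃ r : pushout x m ⟶ Z, i ≫ r = y ∧ j ≫ r = 0 :=
    ⟨hpo.desc y 0 (by simp [w]), hpo.inl_desc _ _ _, hpo.inr_desc _ _ _⟩
  have hT := shortExact_of_isPushout hS hpo hir hjr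
  rw [extClass_comp_mk₀_eq hS hT m i hpo.w.symm hir] at hmem
  obtain ⟨Q, k, wk, hQ, hQF⟩ := hcl m j hm ⟨Z, r, hjr, hT, hmem⟩
  have hxik : x ≫ i ≫ k = 0 := by rw [hpo.w_assoc, ← Category.assoc, wk]
  obtain ⟨c, hc⟩ : ∃ c : Z ⟶ Q, y ≫ c = i ≫ k := ⟨_, hS.exact.g_desc _ hxik⟩
  rw [← mk₀_comp_extClass_eq hS hQ i c hpo.w hc.symm]
  exact hF.pull _ _ _ c _ hQF

lemma IsFDeflation.mem_of_mk₀_comp_eq_zero (hF : IsAddSubfunctor F) {E Z M : C} {e : E ⟶ Z}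
    (he : IsFDeflation F e) {δ : Ext Z M 1} (hδ : (Ext.mk₀ e).comp δ (zero_add 1) = 0) :
    δ ∈ F Z M := by
  obtain ⟨K, k, wk, hK, hKF⟩ := he
  obtain ⟨s', rfl⟩ := Ext.contravariant_sequence_exact₃ hK M δ hδ (add_zero 1)
  obtain ⟨s, rfl⟩ := (Ext.mk₀_bijective _ _).surjective s'
  exact hF.push _ _ _ s _ hKF

lemma InflationsClosed.reflectsAlongDeflations (hF : IsAddSubfunctor F)
    (hcl : InflationsClosed F) : ReflectsAlongDeflations F := by
  intro A B Z E x y w hS e he hmem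
  have hpb := IsPullback.of_hasPullback y e
  set p := pullback.fst y e
  set q := pullback.snd y e
  obtain ⟨m, hmp, hmq⟩ : ∃ m : A ⟶ pullback y e, m ≫ p = x ∧ m ≫ q = 0 :=
    ⟨hpb.lift x 0 (by simp [w]), hpb.lift_fst _ _ _, hpb.lift_snd _ _ _⟩
  have hT := shortExact_of_isPullback hS hpb hmp hmq
  have hTS := mk₀_comp_extClass_eq hT hS p e hmp hpb.w
  have hm : IsFInflation F m := ⟨E, q, hmq, hT, hTS ▸ hmem⟩
  refine hcl.extClass_mem_of_comp_mk₀_mem hF hS hm (he.mem_of_mk₀_comp_eq_zero hF ?_)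
  rw [← Ext.comp_assoc_of_third_deg_zero, hTS]
  exact hT.extClass_comp

lemma inflationsClosed_iff_reflectsAlongDeflations (hF : IsAddSubfunctor F) :
    InflationsClosed F ↔ ReflectsAlongDeflations F :=
  ⟨fun h ↦ h.reflectsAlongDeflations hF, fun h ↦ h.inflationsClosed hF⟩

end Subfunctor

section EClass

variable {ξ : Set (ShortComplex C)}

lemma extClass_mem_eClass_iff (hiso : ∀ S ∈ ξ, ∀ S' : ShortComplex C, Nonempty (S ≅ S') → S' ∈ ξ)
    {S : ShortComplex C} (hS : S.ShortExact) : hS.extClass ∈ EClass ξ S.X₃ S.X₁ ↔ S ∈ ξ := by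
  refine ⟨?_, fun h ↦ ⟨S.X₂, S.f, S.g, S.zero, hS, h, rfl⟩⟩
  rintro ⟨B, f, g, w, hT, hTξ, hTS⟩
  exact hiso _ hTξ _ (nonempty_iso_of_extClass_eq hT hS hTS)

lemma isFDeflation_eClass_of_mem {A B Z : C} {x : A ⟶ B} {y : B ⟶ Z} {w : x ≫ y = 0}
    (hS : (ShortComplex.mk x y w).ShortExact) (h : ShortComplex.mk x y w ∈ ξ) :
    IsFDeflation (EClass ξ) y :=
  ⟨A, x, w, hS, B, x, y, w, hS, h, rfl⟩

lemma IsSaturated.reflectsAlongDeflations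
    (hiso : ∀ S ∈ ξ, ∀ S' : ShortComplex C, Nonempty (S ≅ S') → S' ∈ ξ) (hsat : IsSaturated ξ) :
    ReflectsAlongDeflations (EClass ξ) := by
  rintro A B Z E x y w hS e ⟨K, k, wk, hK, hKξ⟩ hmem
  have hpb := IsPullback.of_hasPullback y e
  set p := pullback.fst y e
  set q := pullback.snd y e
  obtain ⟨m, hmp, hmq⟩ : ∃ m : A ⟶ pullback y e, m ≫ p = x ∧ m ≫ q = 0 :=
    ⟨hpb.lift x 0 (by simp [w]), hpb.lift_fst _ _ _, hpb.lift_snd _ _ _⟩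
  obtain ⟨n, hnp, hnq⟩ : ∃ n : K ⟶ pullback y e, n ≫ p = 0 ∧ n ≫ q = k :=
    ⟨hpb.lift 0 k (by simp [wk]), hpb.lift_fst _ _ _, hpb.lift_snd _ _ _⟩
  have hrow := shortExact_of_isPullback hS hpb hmp hmq
  have hcol := shortExact_of_isPullback hK hpb.flip hnq hnp
  rw [mk₀_comp_extClass_eq hrow hS p e hmp hpb.w] at hmem
  exact (extClass_mem_eClass_iff hiso hS).2 <|
    hsat x y k e m q n p w wk hmq hnp hmp hnq hpb.w.symm hpb hS hK hrow hcol
      ((extClass_mem_eClass_iff hiso hK).1 hKξ) ((extClass_mem_eClass_iff hiso hrow).1 hmem)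

lemma ReflectsAlongDeflations.isSaturated
    (hiso : ∀ S ∈ ξ, ∀ S' : ShortComplex C, Nonempty (S ≅ S') → S' ∈ ξ)
    (hrefl : ReflectsAlongDeflations (EClass ξ)) : IsSaturated ξ := by
  intro A₁ B₁ Z A₂ B₂ M x₁ y₁ x₂ y₂ m₁ e₁ m₂ e₂ w₁ w₂ wr wc hx₁ _ hsq _ h₁ h₂ hr _ hξ₂ hξr
  refine (extClass_mem_eClass_iff hiso h₁).1
    (hrefl x₁ y₁ w₁ h₁ y₂ (isFDeflation_eClass_of_mem h₂ hξ₂) ?_)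
  rw [mk₀_comp_extClass_eq hr h₁ e₂ y₂ hx₁ hsq.symm]
  exact (extClass_mem_eClass_iff hiso hr).2 hξr

lemma isSaturated_iff_reflectsAlongDeflations
    (hiso : ∀ S ∈ ξ, ∀ S' : ShortComplex C, Nonempty (S ≅ S') → S' ∈ ξ) :
    IsSaturated ξ ↔ ReflectsAlongDeflations (EClass ξ) :=
  ⟨IsSaturated.reflectsAlongDeflations hiso, ReflectsAlongDeflations.isSaturated hiso⟩

lemma IsProperClass.isAddSubfunctor (hξ : IsProperClass ξ) : IsAddSubfunctor (EClass ξ) where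
  zero_mem Z A := by
    let s := ShortComplex.Splitting.ofHasBinaryBiproduct A Z
    rw [← extClass_eq_zero_of_splitting s.shortExact s]
    exact (extClass_mem_eClass_iff hξ.iso_closed s.shortExact).2 (hξ.split_mem _ ⟨s⟩)
  add_mem := by
    rintro Z A _ ⟨B, f, g, w, hS, hSξ, rfl⟩ _ ⟨B', f', g', w', hT, hTξ, rfl⟩
    rw [extClass_add_extClass hS hT]
    exact hξ.cobase_change _ _ _ (hξ.base_change _ _ _
      ((extClass_mem_eClass_iff hξ.iso_closed _).2 (hξ.sum_mem _ hSξ _ hTξ)) _ _) _ _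
  neg_mem Z A δ hδ := by
    simpa [Ext.mk₀_neg, Ext.comp_neg] using hξ.cobase_change Z A δ hδ A (-𝟙 A)
  push Z A A' a δ hδ := hξ.cobase_change Z A δ hδ A' a
  pull Z Z' A c δ hδ := hξ.base_change Z A δ hδ Z' c

lemma IsAddSubfunctor.isProperClass (hSE : ∀ S ∈ ξ, S.ShortExact)
    (hiso : ∀ S ∈ ξ, ∀ S' : ShortComplex C, Nonempty (S ≅ S') → S' ∈ ξ)
    (hF : IsAddSubfunctor (EClass ξ)) : IsProperClass ξ where
  shortExact := hSE
  iso_closed := hiso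
  split_mem := by
    rintro S ⟨s⟩
    rw [← extClass_mem_eClass_iff hiso s.shortExact, extClass_eq_zero_of_splitting _ s]
    exact hF.zero_mem _ _
  sum_mem S hS T hT := by
    have hSF := (extClass_mem_eClass_iff hiso (hSE S hS)).2 hS
    have hTF := (extClass_mem_eClass_iff hiso (hSE T hT)).2 hT
    have hST := shortExact_biprodShortComplex (hSE S hS) (hSE T hT)
    rw [← extClass_mem_eClass_iff hiso hST, extClass_biprodShortComplex (hSE S hS) (hSE T hT)]
    exact hF.add_mem _ _ _ (hF.push _ _ _ _ _ (hF.pull _ _ _ _ _ hSF)) _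
      (hF.push _ _ _ _ _ (hF.pull _ _ _ _ _ hTF))
  base_change Z A δ hδ Z' c := hF.pull Z Z' A c δ hδ
  cobase_change Z A δ hδ A' a := hF.push Z A A' a δ hδ

lemma isProperClass_iff_isAddSubfunctor (hSE : ∀ S ∈ ξ, S.ShortExact)
    (hiso : ∀ S ∈ ξ, ∀ S' : ShortComplex C, Nonempty (S ≅ S') → S' ∈ ξ) :
    IsProperClass ξ ↔ IsAddSubfunctor (EClass ξ) :=
  ⟨IsProperClass.isAddSubfunctor, IsAddSubfunctor.isProperClass hSE hiso⟩

end EClass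

/-- A class `ξ` of short exact sequences closed under isomorphism is a saturated
proper class if and only if the associated subfunctor `E_ξ` of `Ext¹` is a closed
additive subfunctor. -/
theorem saturated_proper_iff_closed_subfunctor
    (ξ : Set (ShortComplex C))
    (hSE : ∀ S ∈ ξ, S.ShortExact)
    (hiso : ∀ S ∈ ξ, ∀ S' : ShortComplex C, Nonempty (S ≅ S') → S' ∈ ξ) :
    (IsProperClass ξ ∧ IsSaturated ξ) ↔
      (IsAddSubfunctor (EClass ξ) ∧ InflationsClosed (EClass ξ)) := by
  rw [isProperClass_iff_isAddSubfunctor hSE hiso, isSaturated_iff_reflectsAlongDeflations hiso]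
  exact and_congr_right fun hF ↦ (inflationsClosed_iff_reflectsAlongDeflations hF).symm
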